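/- Let {ψ_n}_{n≥1} be any sequence of measurable (possibly randomized) tests ψ_n : D^n → [0,1] applied to the full data (X_i, Y_i(1), Y_i(0), T_i)_{i=1}^n, i.i.d. with law P under P. Then sup_{Q ∈ E} limsup_{n→∞} E_Q[ψ_n] ≤ limsup_{n→∞} sup_{P ∈ P_SI} E_P[ψ_n]. -/

import Mathlib

/-!
STATEMENT 0 (no-free-lunch for conditional independence testing, finite sample):
If a (possibly randomized) test `ψ : D^n → [0,1]` on the full data
`(X, Y(1), Y(0), T)` has level `α` over the strong-ignorability class `P_SI`,
then it has level `α` over the whole class `E`.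
-/

open MeasureTheory ProbabilityTheory Filter

noncomputable section

/-- The full-data sample space `D = ℝ^p × ℝ² × {0,1}`. -/
abbrev FullData (p : ℕ) : Type := (Fin p → ℝ) × ℝ × ℝ × Bool

/-- Covariate coordinate. -/
def Xc {p : ℕ} (ω : FullData p) : Fin p → ℝ := ω.1

/-- Treated potential outcome coordinate `Y(1)`. -/
def Y1c {p : ℕ} (ω : FullData p) : ℝ := ω.2.1

/-- Control potential outcome coordinate `Y(0)`. -/
def Y0c {p : ℕ} (ω : FullData p) : ℝ := ω.2.2.1

/-- Treatment coordinate `T`. -/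
def Tc {p : ℕ} (ω : FullData p) : Bool := ω.2.2.2

lemma measurable_Xc {p : ℕ} : Measurable (Xc (p := p)) := measurable_fst

/-- The σ-algebra generated by the covariates `X`. -/
def mX (p : ℕ) : MeasurableSpace (FullData p) :=
  MeasurableSpace.comap Xc inferInstance

lemma mX_le (p : ℕ) : mX p ≤ (inferInstance : MeasurableSpace (FullData p)) := measurable_Xc.comap_le

/-- The class `E`: distributions of `(X, Y(1), Y(0), T)` such that at least one coordinate
of `X` has a law absolutely continuous w.r.t. Lebesgue measure, and the laws of `Y(1)` and
`Y(0)` are atomless (continuous). -/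
def memE {p : ℕ} (P : ProbabilityMeasure (FullData p)) : Prop :=
  (∃ j : Fin p,
    ((P : Measure (FullData p)).map (fun ω => Xc ω j)).AbsolutelyContinuous
      (volume : Measure ℝ)) ∧
  (∀ y : ℝ, ((P : Measure (FullData p)).map Y1c) {y} = 0) ∧
  (∀ y : ℝ, ((P : Measure (FullData p)).map Y0c) {y} = 0)

/-- The strong-ignorability class `P_SI ⊆ E`: `(Y(1), Y(0)) ⫫ T | X`. -/
def memPSI {p : ℕ} (P : ProbabilityMeasure (FullData p)) : Prop :=
  memE P ∧
    CondIndepFun (mX p) (mX_le p) (fun ω => (Y1c ω, Y0c ω)) Tc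
      (P : Measure (FullData p))

/-- Expected value `E_P[ψ_n]` of a test `ψ_n : D^n → [0,1]` when the `n` data points are
i.i.d. with law `P`, i.e. the integral of `ψ_n` against the `n`-fold product measure. -/
def testExp {p : ℕ} (n : ℕ) (ψ : (Fin n → FullData p) → ℝ)
    (P : ProbabilityMeasure (FullData p)) : ℝ :=
  ∫ x, ψ x ∂(Measure.pi fun _ : Fin n => (P : Measure (FullData p)))

/-!
Refine the covariate into finitely many cells. Drawing `f k` from the conditional law of the
treatment in cell `k`, independently over the cells, and forcing the treatment to equal `f` of the
cell replaces the true law by one under which the treatment is a function of the covariate, so that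
strong ignorability is automatic. Averaged over `f`, an i.i.d. sample from the modified law cannot
be told apart from an i.i.d. sample from the true law unless two points share a cell. Since the
covariate has no atoms, the probability of such a collision tends to zero as the cells shrink.
-/

open scoped ENNReal

section ProductMeasure

variable {ι κ : Type*} [Fintype ι] [Fintype κ]

lemma lintegral_pi_prod_eval_of_injective {E : κ → Type*} [∀ k, MeasurableSpace (E k)]
    {μ : ∀ k, Measure (E k)} [∀ k, IsProbabilityMeasure (μ k)] {k : ι → κ}
    (hk : Function.Injective k) {h : ∀ i, E (k i) → ℝ≥0∞} (hh : ∀ i, Measurable (h i)) :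
    ∫⁻ f, ∏ i, h i (f (k i)) ∂Measure.pi μ = ∏ i, ∫⁻ a, h i a ∂μ (k i) := by
  have indep : iIndepFun (fun i (f : ∀ k, E k) => h i (f (k i))) (Measure.pi μ) :=
    ((iIndepFun_pi (X := fun _ => id) fun _ => aemeasurable_id).precomp hk).comp h hh
  rw [lintegral_prod_eq_prod_lintegral_of_indepFun _ _ indep
    fun i => (hh i).comp (measurable_pi_apply _)]
  exact Finset.prod_congr rfl fun i _ => (measurePreserving_eval μ (k i)).lintegral_comp (hh i)

variable {E : ι → Type*}

lemma indicator_univ_pi_prod (s : ∀ i, Set (E i)) (g : ∀ i, E i → ℝ≥0∞) (x : ∀ i, E i) :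
    (Set.univ.pi s).indicator (fun x => ∏ i, g i (x i)) x = ∏ i, (s i).indicator (g i) (x i) := by
  classical
  simp [Set.indicator_apply, Finset.prod_ite_zero]

lemma pi_withDensity [∀ i, MeasurableSpace (E i)] (μ : ∀ i, Measure (E i))
    [∀ i, IsProbabilityMeasure (μ i)] {g : ∀ i, E i → ℝ≥0∞} (hg : ∀ i, Measurable (g i))
    [∀ i, SigmaFinite ((μ i).withDensity (g i))] :
    Measure.pi (fun i => (μ i).withDensity (g i)) =
      (Measure.pi μ).withDensity fun x => ∏ i, g i (x i) := by
  refine Measure.pi_eq fun s hs => ?_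
  simp_rw [withDensity_apply _ (MeasurableSet.univ_pi hs), withDensity_apply _ (hs _),
    ← lintegral_indicator (MeasurableSet.univ_pi hs), ← lintegral_indicator (hs _),
    indicator_univ_pi_prod]
  exact lintegral_pi_prod_eval_of_injective Function.injective_id fun i => (hg i).indicator (hs i)

end ProductMeasure

section DistinctSamples

variable {ι Ω : Type*}

lemma eventually_injective_frestrictLe [Finite ι] {β : Type*} {x : ι → ℕ → β}
    (hx : Function.Injective x) :
    ∀ᶠ N in atTop, Function.Injective fun i => Preorder.frestrictLe (π := fun _ => β) N (x i) := by
  simp only [Function.Injective, eventually_all]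
  intro i j
  by_cases hij : i = j
  · simp [hij]
  · obtain ⟨m, hm⟩ := Function.ne_iff.1 (hx.ne hij)
    filter_upwards [eventually_ge_atTop m] with N hN h
    exact absurd (congrFun h ⟨m, Finset.mem_Iic.2 hN⟩) hm

variable [MeasurableSpace Ω]

lemma measurableSet_injective_sample [Finite ι] {κ : Type*} [MeasurableSpace κ] [Countable κ]
    [MeasurableSingletonClass κ] {c : Ω → κ} (hc : Measurable c) :
    MeasurableSet {x : ι → Ω | Function.Injective fun i => c (x i)} :=
  (measurable_pi_lambda (fun (x : ι → Ω) i => c (x i)) fun i => hc.comp (measurable_pi_apply i))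
    (MeasurableSet.of_discrete (s := {y : ι → κ | Function.Injective y}))

variable [Fintype ι] {Q : Measure Ω} [SigmaFinite Q]

lemma ae_pi_ne_of_atomless {β : Type*} [MeasurableSpace β] [MeasurableEq β] {Z : Ω → β}
    (hZ : Measurable Z) (h_atomless : ∀ b, Q (Z ⁻¹' {b}) = 0) {i j : ι} (hij : i ≠ j) :
    ∀ᵐ x ∂Measure.pi fun _ : ι => Q, Z (x i) ≠ Z (x j) := by
  classical
  have h_meas : MeasurableSet {x : ι → Ω | Z (x i) = Z (x j)} :=
    measurableSet_eq_fun (hZ.comp (measurable_pi_apply i)) (hZ.comp (measurable_pi_apply j))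
  simp only [ae_iff, ne_eq, not_not]
  rw [← lintegral_indicator_one h_meas, ← lintegral_zero (μ := Measure.pi fun _ : ι => Q)]
  refine lintegral_eq_of_lmarginal_eq {i} (measurable_one.indicator h_meas) measurable_const ?_
  ext x
  have h_section (ω : Ω) : {x : ι → Ω | Z (x i) = Z (x j)}.indicator (1 : (ι → Ω) → ℝ≥0∞)
      (Function.update x i ω) = (Z ⁻¹' {Z (x j)}).indicator 1 ω := by
    simp [Set.indicator_apply, Function.update_of_ne hij.symm]
  simp_rw [lmarginal_singleton, h_section]
  rw [lintegral_indicator_one (hZ (measurableSet_singleton _)), h_atomless, lintegral_zero]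

lemma ae_pi_injective_of_atomless {β : Type*} [MeasurableSpace β] [MeasurableEq β] {Z : Ω → β}
    (hZ : Measurable Z) (h_atomless : ∀ b, Q (Z ⁻¹' {b}) = 0) :
    ∀ᵐ x ∂Measure.pi fun _ : ι => Q, Function.Injective fun i => Z (x i) := by
  have h_ne : ∀ᵐ x ∂Measure.pi fun _ : ι => Q, ∀ i j, i ≠ j → Z (x i) ≠ Z (x j) := by
    simp only [eventually_all]
    exact fun i j => ae_pi_ne_of_atomless hZ h_atomless
  filter_upwards [h_ne] with x hx i j
  exact not_imp_not.1 (hx i j)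

lemma aecover_injective_frestrictLe {β : Type*} [Countable β] [MeasurableSpace β]
    [MeasurableSingletonClass β] {Z : Ω → ℕ → β} (hZ : Measurable Z)
    (h_atomless : ∀ b, Q (Z ⁻¹' {b}) = 0) :
    AECover (Measure.pi fun _ : ι => Q) atTop fun N =>
      {x | Function.Injective fun i => Preorder.frestrictLe (π := fun _ => β) N (Z (x i))} where
  ae_eventually_mem := by
    filter_upwards [ae_pi_injective_of_atomless hZ h_atomless] with x hx
    exact eventually_injective_frestrictLe hx
  measurableSet N :=
    measurableSet_injective_sample ((Preorder.measurable_frestrictLe N).comp hZ)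

end DistinctSamples

/-- The density of the Dirac mass at `a` with respect to `ν`, for an atom `a` of `ν`. -/
def diracDensity {τ : Type*} [MeasurableSpace τ] (ν : Measure τ) (a : τ) : τ → ℝ≥0∞ :=
  ({a} : Set τ).indicator fun _ => (ν {a})⁻¹

section Assignment

variable {ι Ω κ τ : Type*} [MeasurableSpace κ] [MeasurableSpace τ]

lemma diracDensity_comm (ν : Measure τ) (a b : τ) : diracDensity ν a b = diracDensity ν b a := by
  by_cases h : a = b
  · rw [h]
  · simp [diracDensity, h, Ne.symm h]

lemma lintegral_diracDensity [MeasurableSingletonClass τ] {ν : Measure τ} [IsFiniteMeasure ν]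
    {a : τ} (ha : ν {a} ≠ 0) : ∫⁻ b, diracDensity ν a b ∂ν = 1 := by
  rw [diracDensity, lintegral_indicator_const (measurableSet_singleton a),
    ENNReal.inv_mul_cancel ha (measure_ne_top ν _)]

/-- The likelihood ratio at `ω` of the law obtained by forcing the treatment `T` to be the value
of the assignment `f` at the cell `c`, when `q` is the conditional law of `T` given `c`. -/
def assignmentDensity (q : Kernel κ τ) (c : Ω → κ) (T : Ω → τ) (f : κ → τ) (ω : Ω) : ℝ≥0∞ :=
  diracDensity (q (c ω)) (f (c ω)) (T ω)

variable {q : Kernel κ τ} {c : Ω → κ} {T : Ω → τ} {f : κ → τ}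

lemma lintegral_prod_assignmentDensity [Fintype ι] [Fintype κ] [MeasurableSingletonClass τ]
    [IsMarkovKernel q] {x : ι → Ω} (h_inj : Function.Injective fun i => c (x i))
    (h_atom : ∀ i, q (c (x i)) {T (x i)} ≠ 0) :
    ∫⁻ f, ∏ i, assignmentDensity q c T f (x i) ∂Measure.pi q = 1 :=
  calc ∫⁻ f, ∏ i, assignmentDensity q c T f (x i) ∂Measure.pi q
      = ∫⁻ f, ∏ i, diracDensity (q (c (x i))) (T (x i)) (f (c (x i))) ∂Measure.pi q := by
        -- The symmetry exchanges the random assignment with the observed treatment.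
        simp_rw [assignmentDensity, diracDensity_comm _ _ (T _)]
    _ = ∏ i, ∫⁻ b, diracDensity (q (c (x i))) (T (x i)) b ∂q (c (x i)) :=
        lintegral_pi_prod_eval_of_injective h_inj
          fun _ => measurable_const.indicator (measurableSet_singleton _)
    _ = 1 := Finset.prod_eq_one fun i _ => lintegral_diracDensity (h_atom i)

variable [MeasurableSpace Ω]

/-- The law `Q` modified so that the treatment `T` is the value of the assignment `f` at the
cell `c`. It is a probability measure if `f k` is an atom of `q k` for every cell `k`. -/
def assignmentLaw (Q : Measure Ω) (q : Kernel κ τ) (c : Ω → κ) (T : Ω → τ) (f : κ → τ) :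
    Measure Ω :=
  Q.withDensity (assignmentDensity q c T f)

variable {Q : Measure Ω}

lemma assignmentLaw_absolutelyContinuous : assignmentLaw Q q c T f ≪ Q :=
  withDensity_absolutelyContinuous _ _

section DiscreteTreatment

variable [Countable τ]

lemma ae_pi_kernel_singleton_ne_zero [Fintype κ] [IsFiniteKernel q] :
    ∀ᵐ f ∂Measure.pi q, ∀ k, q k {f k} ≠ 0 :=
  eventually_all.2 fun _ =>
    Measure.tendsto_eval_ae_ae.eventually (ae_iff_of_countable.2 fun _ h => h)

variable [MeasurableSingletonClass κ] [MeasurableSingletonClass τ]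

lemma measurable_assignmentDensity [Countable κ] (hc : Measurable c) (hT : Measurable T) :
    Measurable (assignmentDensity q c T f) :=
  (Measurable.of_discrete (f := fun p : κ × τ => diracDensity (q p.1) (f p.1) p.2)).comp
    (hc.prodMk hT)

lemma measurable_uncurry_assignmentDensity [Finite κ] (hc : Measurable c) (hT : Measurable T) :
    Measurable fun p : (κ → τ) × Ω => assignmentDensity q c T p.1 p.2 :=
  (Measurable.of_discrete (f := fun p : (κ → τ) × κ × τ =>
    diracDensity (q p.2.1) (p.1 p.2.1) p.2.2)).comp
    (measurable_fst.prodMk ((hc.prodMk hT).comp measurable_snd))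

lemma assignmentLaw_ae_eq_comp [Countable κ] (hc : Measurable c) (hT : Measurable T) :
    T =ᵐ[assignmentLaw Q q c T f] f ∘ c := by
  refine (ae_withDensity_iff (measurable_assignmentDensity hc hT)).2 (.of_forall fun ω hω => ?_)
  contrapose! hω
  simp_all [assignmentDensity, diracDensity]

lemma ae_singleton_ne_zero_of_hasCondDistrib [Countable κ] [SFinite Q] [IsSFiniteKernel q]
    (h : HasCondDistrib T c q Q) : ∀ᵐ ω ∂Q, q (c ω) {T ω} ≠ 0 := by
  have h_compProd : ∀ᵐ p ∂(Q.map c ⊗ₘ q), q p.1 {p.2} ≠ 0 :=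
    Measure.ae_compProd_of_ae_ae (Set.to_countable _).measurableSet
      (.of_forall fun _ => ae_iff_of_countable.2 fun _ h => h)
  rw [← h.map_eq] at h_compProd
  exact ae_of_ae_map h.aemeasurable h_compProd

lemma isProbabilityMeasure_assignmentLaw [Countable κ] [IsProbabilityMeasure Q] [IsFiniteKernel q]
    (h : HasCondDistrib T c q Q) (hf : ∀ k, q k {f k} ≠ 0) :
    IsProbabilityMeasure (assignmentLaw Q q c T f) := by
  have : IsProbabilityMeasure (Q.map c) := Measure.isProbabilityMeasure_map h.aemeasurable_fst
  refine ⟨?_⟩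
  calc assignmentLaw Q q c T f Set.univ
      = ∫⁻ ω, diracDensity (q (c ω)) (f (c ω)) (T ω) ∂Q := by
        rw [assignmentLaw, withDensity_apply _ .univ, setLIntegral_univ]
        rfl
    _ = ∫⁻ p, diracDensity (q p.1) (f p.1) p.2 ∂(Q.map c ⊗ₘ q) := by
        rw [← h.map_eq, lintegral_map' Measurable.of_discrete.aemeasurable h.aemeasurable]
    _ = ∫⁻ k, ∫⁻ b, diracDensity (q k) (f k) b ∂q k ∂Q.map c :=
        Measure.lintegral_compProd .of_discrete
    _ = 1 := by simp [lintegral_diracDensity (hf _)]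

variable [Fintype ι] [IsProbabilityMeasure Q] {Φ : (ι → Ω) → ℝ≥0∞}

lemma setLIntegral_pi_assignmentLaw [Countable κ] [IsFiniteKernel q]
    (h : HasCondDistrib T c q Q) (hc : Measurable c) (hT : Measurable T)
    (hf : ∀ k, q k {f k} ≠ 0) (hΦ : Measurable Φ) {D : Set (ι → Ω)} (hD : MeasurableSet D) :
    ∫⁻ x in D, Φ x ∂Measure.pi (fun _ => assignmentLaw Q q c T f) =
      ∫⁻ x in D, (∏ i, assignmentDensity q c T f (x i)) * Φ x ∂Measure.pi (fun _ => Q) := by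
  have h_density := measurable_assignmentDensity (q := q) (f := f) hc hT
  have : IsProbabilityMeasure (Q.withDensity (assignmentDensity q c T f)) :=
    isProbabilityMeasure_assignmentLaw h hf
  simp_rw [assignmentLaw]
  rw [pi_withDensity _ fun _ => h_density]
  exact setLIntegral_withDensity_eq_setLIntegral_mul _
    (Finset.univ.measurable_fun_prod fun i _ => h_density.comp (measurable_pi_apply i)) hΦ hD

variable [IsMarkovKernel q]

lemma setLIntegral_injective_eq_lintegral_assignmentLaw [Fintype κ] (h : HasCondDistrib T c q Q)
    (hc : Measurable c) (hT : Measurable T) (hΦ : Measurable Φ) :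
    ∫⁻ x in {x | Function.Injective fun i => c (x i)}, Φ x ∂Measure.pi (fun _ => Q) =
      ∫⁻ f, ∫⁻ x in {x | Function.Injective fun i => c (x i)}, Φ x
        ∂Measure.pi (fun _ => assignmentLaw Q q c T f) ∂Measure.pi q := by
  set D : Set (ι → Ω) := {x | Function.Injective fun i => c (x i)}
  have hD : MeasurableSet D := measurableSet_injective_sample hc
  have h_atom : ∀ᵐ x ∂Measure.pi fun _ : ι => Q, ∀ i, q (c (x i)) {T (x i)} ≠ 0 :=
    eventually_all.2 fun _ =>
      Measure.tendsto_eval_ae_ae.eventually (ae_singleton_ne_zero_of_hasCondDistrib h)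
  have h_prod : Measurable fun p : (κ → τ) × (ι → Ω) =>
      ∏ i, assignmentDensity q c T p.1 (p.2 i) :=
    Finset.univ.measurable_fun_prod fun i _ => (measurable_uncurry_assignmentDensity hc hT).comp
      (measurable_fst.prodMk ((measurable_pi_apply i).comp measurable_snd))
  calc ∫⁻ x in D, Φ x ∂Measure.pi (fun _ => Q)
      = ∫⁻ x in D, ∫⁻ f, (∏ i, assignmentDensity q c T f (x i)) * Φ x ∂Measure.pi q
          ∂Measure.pi (fun _ => Q) := by
        refine setLIntegral_congr_fun_ae hD ?_
        filter_upwards [h_atom] with x hx h_inj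
        rw [lintegral_mul_const _ .of_discrete, lintegral_prod_assignmentDensity h_inj hx, one_mul]
    _ = ∫⁻ f, ∫⁻ x in D, (∏ i, assignmentDensity q c T f (x i)) * Φ x ∂Measure.pi (fun _ => Q)
          ∂Measure.pi q :=
        lintegral_lintegral_swap
          ((h_prod.comp measurable_swap).mul (hΦ.comp measurable_fst)).aemeasurable
    _ = ∫⁻ f, ∫⁻ x in D, Φ x ∂Measure.pi (fun _ => assignmentLaw Q q c T f) ∂Measure.pi q := by
        refine lintegral_congr_ae ?_
        filter_upwards [ae_pi_kernel_singleton_ne_zero] with f hf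
        exact (setLIntegral_pi_assignmentLaw h hc hT hf hΦ hD).symm

lemma setLIntegral_injective_le_of_forall_assignmentLaw [Finite κ] (h : HasCondDistrib T c q Q)
    (hc : Measurable c) (hT : Measurable T) (hΦ : Measurable Φ) {S : ℝ≥0∞}
    (hS : ∀ f : κ → τ, (∀ k, q k {f k} ≠ 0) →
      ∫⁻ x, Φ x ∂Measure.pi (fun _ => assignmentLaw Q q c T f) ≤ S) :
    ∫⁻ x in {x | Function.Injective fun i => c (x i)}, Φ x ∂Measure.pi (fun _ => Q) ≤ S := by
  have := Fintype.ofFinite κ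
  rw [setLIntegral_injective_eq_lintegral_assignmentLaw h hc hT hΦ]
  refine (lintegral_mono_ae (g := fun _ => S) ?_).trans_eq (by simp)
  filter_upwards [ae_pi_kernel_singleton_ne_zero] with f hf
  exact (setLIntegral_le_lintegral _ _).trans (hS f hf)

end DiscreteTreatment

end Assignment

section NoFreeLunch

lemma integral_mem_Icc_zero_one {α : Type*} [MeasurableSpace α] {μ : Measure α}
    [IsProbabilityMeasure μ] {φ : α → ℝ} (h01 : ∀ x, φ x ∈ Set.Icc (0 : ℝ) 1) :
    ∫ x, φ x ∂μ ∈ Set.Icc (0 : ℝ) 1 :=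
  ⟨integral_nonneg fun x => (h01 x).1,
    (integral_mono_of_nonneg (.of_forall fun x => (h01 x).1) (integrable_const 1)
      (.of_forall fun x => (h01 x).2)).trans_eq (by simp)⟩

variable {Ω 𝒳 τ : Type*} [MeasurableSpace Ω] [MeasurableSpace 𝒳] [MeasurableSpace τ]
  [Countable τ] [MeasurableSingletonClass τ] {X : Ω → 𝒳} {T : Ω → τ}

lemma setLIntegral_injective_le_of_forall_ae_eq_comp {ι κ : Type*} [Fintype ι] [Finite κ]
    [MeasurableSpace κ] [MeasurableSingletonClass κ] {Q : Measure Ω} [IsProbabilityMeasure Q]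
    {c : Ω → κ} (hc : Measurable c) (hT : Measurable T) {Φ : (ι → Ω) → ℝ≥0∞}
    (hΦ : Measurable Φ) {S : ℝ≥0∞}
    (hS : ∀ (P : Measure Ω) [IsProbabilityMeasure P], P ≪ Q → ∀ f : κ → τ, T =ᵐ[P] f ∘ c →
      ∫⁻ x, Φ x ∂Measure.pi (fun _ => P) ≤ S) :
    ∫⁻ x in {x | Function.Injective fun i => c (x i)}, Φ x ∂Measure.pi (fun _ => Q) ≤ S := by
  have : Nonempty τ := (nonempty_of_isProbabilityMeasure Q).map T
  have h : HasCondDistrib T c (condDistrib T c Q) Q :=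
    ⟨(hc.prodMk hT).aemeasurable, (compProd_map_condDistrib hT.aemeasurable).symm⟩
  refine setLIntegral_injective_le_of_forall_assignmentLaw h hc hT hΦ fun f hf => ?_
  have := isProbabilityMeasure_assignmentLaw h hf
  exact hS _ assignmentLaw_absolutelyContinuous f (assignmentLaw_ae_eq_comp hc hT)

variable [MeasurableSpace.CountablySeparated 𝒳]

lemma lintegral_pi_le_of_forall_ae_eq_comp {ι : Type*} [Fintype ι] {Q : Measure Ω}
    [IsProbabilityMeasure Q] (hX : Measurable X) (h_atomless : ∀ a, Q (X ⁻¹' {a}) = 0)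
    (hT : Measurable T) {Φ : (ι → Ω) → ℝ≥0∞} (hΦ : Measurable Φ) {S : ℝ≥0∞}
    (hS : ∀ (P : Measure Ω) [IsProbabilityMeasure P], P ≪ Q →
      ∀ t : 𝒳 → τ, Measurable t → T =ᵐ[P] t ∘ X → ∫⁻ x, Φ x ∂Measure.pi (fun _ => P) ≤ S) :
    ∫⁻ x, Φ x ∂Measure.pi (fun _ => Q) ≤ S := by
  obtain ⟨code, h_code, h_inj⟩ :=
    MeasurableSpace.measurable_injection_nat_bool_of_countablySeparated 𝒳
  have h_code_atomless (b : ℕ → Bool) : Q ((code ∘ X) ⁻¹' {b}) = 0 := by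
    rw [Set.preimage_comp]
    have h_sub : (code ⁻¹' {b}).Subsingleton := Set.subsingleton_singleton.preimage h_inj
    obtain h | ⟨a, h⟩ := h_sub.eq_empty_or_singleton
    · simp [h]
    · rw [h, h_atomless]
  have h_cover := aecover_injective_frestrictLe (ι := ι) (h_code.comp hX) h_code_atomless
  refine le_of_tendsto' (h_cover.lintegral_tendsto_of_countably_generated hΦ.aemeasurable)
    fun N => ?_
  have h_cell := (Preorder.measurable_frestrictLe (X := fun _ => Bool) N).comp h_code
  exact setLIntegral_injective_le_of_forall_ae_eq_comp (h_cell.comp hX) hT hΦ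
    fun P _ hPQ f hf => hS P hPQ _ (Measurable.of_discrete.comp h_cell) hf

variable {Q : ProbabilityMeasure Ω} {𝒞 : ProbabilityMeasure Ω → Prop}

lemma integral_pi_le_iSup {ι : Type*} [Fintype ι] (hX : Measurable X)
    (h_atomless : ∀ a, (Q : Measure Ω) (X ⁻¹' {a}) = 0) (hT : Measurable T)
    (h𝒞 : ∀ P : ProbabilityMeasure Ω, (P : Measure Ω) ≪ Q →
      ∀ t : 𝒳 → τ, Measurable t → T =ᵐ[(P : Measure Ω)] t ∘ X → 𝒞 P)
    {φ : (ι → Ω) → ℝ} (hφ : Measurable φ) (h01 : ∀ x, φ x ∈ Set.Icc (0 : ℝ) 1) :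
    ∫ x, φ x ∂Measure.pi (fun _ => (Q : Measure Ω)) ≤
      ⨆ P : {P : ProbabilityMeasure Ω // 𝒞 P}, ∫ x, φ x ∂Measure.pi fun _ => (P.1 : Measure Ω) := by
  have h_ofReal (P : Measure Ω) [IsProbabilityMeasure P] :
      ENNReal.ofReal (∫ x, φ x ∂Measure.pi fun _ => P) =
        ∫⁻ x, ENNReal.ofReal (φ x) ∂Measure.pi fun _ => P :=
    ofReal_integral_eq_lintegral_ofReal (.of_mem_Icc 0 1 hφ.aemeasurable (.of_forall h01))
      (.of_forall fun x => (h01 x).1)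
  have h_bdd : BddAbove (Set.range fun P : {P : ProbabilityMeasure Ω // 𝒞 P} =>
      ∫ x, φ x ∂Measure.pi fun _ => (P.1 : Measure Ω)) :=
    ⟨1, Set.forall_mem_range.2 fun _ => (integral_mem_Icc_zero_one h01).2⟩
  rw [← ENNReal.ofReal_le_ofReal_iff (Real.iSup_nonneg fun _ => (integral_mem_Icc_zero_one h01).1),
    h_ofReal]
  refine lintegral_pi_le_of_forall_ae_eq_comp hX h_atomless hT hφ.ennreal_ofReal
    fun P _ hPQ t ht hP => ?_
  rw [← h_ofReal]
  exact ENNReal.ofReal_le_ofReal (le_ciSup h_bdd ⟨⟨P, ‹_›⟩, h𝒞 ⟨P, ‹_›⟩ hPQ t ht hP⟩)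

theorem no_free_lunch_asymptotic_general (hX : Measurable X)
    (h_atomless : ∀ a, (Q : Measure Ω) (X ⁻¹' {a}) = 0) (hT : Measurable T)
    (h𝒞 : ∀ P : ProbabilityMeasure Ω, (P : Measure Ω) ≪ Q →
      ∀ t : 𝒳 → τ, Measurable t → T =ᵐ[(P : Measure Ω)] t ∘ X → 𝒞 P)
    {ψ : (n : ℕ) → (Fin n → Ω) → ℝ} (hψ_meas : ∀ n, Measurable (ψ n))
    (hψ_range : ∀ n x, ψ n x ∈ Set.Icc (0 : ℝ) 1) :
    limsup (fun n => ∫ x, ψ n x ∂Measure.pi fun _ => (Q : Measure Ω)) atTop ≤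
      limsup (fun n => ⨆ P : {P : ProbabilityMeasure Ω // 𝒞 P},
        ∫ x, ψ n x ∂Measure.pi fun _ => (P.1 : Measure Ω)) atTop := by
  have h_mem (n : ℕ) (P : ProbabilityMeasure Ω) :
      ∫ x, ψ n x ∂Measure.pi (fun _ => (P : Measure Ω)) ∈ Set.Icc (0 : ℝ) 1 :=
    integral_mem_Icc_zero_one (hψ_range n)
  refine limsup_le_limsup
    (.of_forall fun n => integral_pi_le_iSup hX h_atomless hT h𝒞 (hψ_meas n) (hψ_range n)) ?_ ?_
  · exact (isBoundedUnder_of ⟨0, fun n => (h_mem n Q).1⟩ :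
      IsBoundedUnder (· ≥ ·) atTop _).isCoboundedUnder_le
  · exact isBoundedUnder_of ⟨1, fun n => Real.iSup_le (fun P => (h_mem n P.1).2) zero_le_one⟩

end NoFreeLunch

section StrongIgnorability

lemma condIndepFun_congr_ae {Ω β γ : Type*} {m mΩ : MeasurableSpace Ω} [StandardBorelSpace Ω]
    {hm : m ≤ mΩ} {μ : Measure Ω} [IsFiniteMeasure μ] [MeasurableSpace β] [MeasurableSpace γ]
    {f f' : Ω → β} {g g' : Ω → γ} (h : CondIndepFun m hm f g μ) (hf : f =ᵐ[μ] f')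
    (hg : g =ᵐ[μ] g') : CondIndepFun m hm f' g' μ := by
  rw [← condExpKernel_comp_trim (μ := μ) hm] at hf hg
  exact Kernel.IndepFun.congr' h (Measure.ae_ae_of_ae_comp hf) (Measure.ae_ae_of_ae_comp hg)

variable {p : ℕ}

lemma measurable_Y1c : Measurable (Y1c (p := p)) :=
  measurable_fst.comp measurable_snd

lemma measurable_Y0c : Measurable (Y0c (p := p)) :=
  measurable_fst.comp (measurable_snd.comp measurable_snd)

lemma measurable_Tc : Measurable (Tc (p := p)) :=
  measurable_snd.comp (measurable_snd.comp measurable_snd)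

variable {P Q : ProbabilityMeasure (FullData p)}

lemma memE.of_absolutelyContinuous (hQ : memE Q) (hPQ : (P : Measure (FullData p)) ≪ Q) :
    memE P := by
  obtain ⟨⟨j, hj⟩, h1, h0⟩ := hQ
  exact ⟨⟨j, (hPQ.map measurable_Xc.eval).trans hj⟩,
    fun y => hPQ.map measurable_Y1c (h1 y), fun y => hPQ.map measurable_Y0c (h0 y)⟩

lemma memE.measure_preimage_Xc_singleton (hQ : memE Q) (a : Fin p → ℝ) :
    (Q : Measure (FullData p)) (Xc ⁻¹' {a}) = 0 := by
  obtain ⟨⟨j, hj⟩, -, -⟩ := hQ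
  have h_coord := hj (Real.volume_singleton (a := a j))
  rw [Measure.map_apply measurable_Xc.eval (measurableSet_singleton _)] at h_coord
  exact measure_mono_null (fun ω hω => congrFun hω j) h_coord

lemma memPSI_of_Tc_ae_eq_comp_Xc (hP : memE P) {t : (Fin p → ℝ) → Bool} (ht : Measurable t)
    (h : Tc =ᵐ[(P : Measure (FullData p))] t ∘ Xc) : memPSI P :=
  ⟨hP, condIndepFun_congr_ae (condIndepFun_of_measurable_right
    (measurable_Y1c.prodMk measurable_Y0c) (ht.comp (comap_measurable Xc))) .rfl h.symm⟩

end StrongIgnorability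

/-- For any sequence of measurable randomized tests `ψ_n : D^n → [0,1]`,
`sup_{Q ∈ E} limsup_{n→∞} E_Q[ψ_n] ≤ limsup_{n→∞} sup_{P ∈ P_SI} E_P[ψ_n]`. -/
theorem no_free_lunch_asymptotic {p : ℕ}
    (ψ : (n : ℕ) → (Fin n → FullData p) → ℝ)
    (hψ_meas : ∀ n, Measurable (ψ n))
    (hψ_range : ∀ n x, ψ n x ∈ Set.Icc (0 : ℝ) 1) :
    ∀ Q : ProbabilityMeasure (FullData p), memE Q →
      Filter.limsup (fun n => testExp n (ψ n) Q) Filter.atTop ≤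
        Filter.limsup
          (fun n => ⨆ P : {P : ProbabilityMeasure (FullData p) // memPSI P},
            testExp n (ψ n) P.1) Filter.atTop := by
  intro Q hQ
  have h_memPSI (P : ProbabilityMeasure (FullData p)) (hPQ : (P : Measure (FullData p)) ≪ Q)
      (t : (Fin p → ℝ) → Bool) (ht : Measurable t) (h : Tc =ᵐ[(P : Measure _)] t ∘ Xc) : memPSI P :=
    memPSI_of_Tc_ae_eq_comp_Xc (hQ.of_absolutelyContinuous hPQ) ht h
  exact no_free_lunch_asymptotic_general measurable_Xc hQ.measure_preimage_Xc_singleton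
    measurable_Tc h_memPSI hψ_meas hψ_range

end
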